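/- Assume the dataset D has ℓ¹ diameter at most 1. Then for every z ∈ ℝ^d, the mixup-plus-noise output densities satisfy q(z) ≤ (n / (n − k + k·exp(−1/(kσ)))) · p(z). -/

import Mathlib

open Finset

/-- The d-dimensional isotropic Laplacian density with scale σ. -/
noncomputable def laplacianDensity (d : ℕ) (σ : ℝ) (η : Fin d → ℝ) : ℝ :=
  ((2 * σ) ^ d)⁻¹ * Real.exp (-(∑ i, |η i|) / σ)

/-- The mixup-plus-noise output density of a finite dataset `P`. -/
noncomputable def mixupDensity (d : ℕ) (σ : ℝ) (k : ℕ) (P : Finset (Fin d → ℝ))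
    (z : Fin d → ℝ) : ℝ :=
  ((P.card.choose k : ℝ))⁻¹ *
    ∑ S ∈ P.powersetCard k, laplacianDensity d σ (z - (k : ℝ)⁻¹ • ∑ x ∈ S, x)

/-!
Let `U` be a uniformly random `k`-subset of `D` and `f U` the noise density centred at the mean
of `U`, so that `p(z) = 𝔼 f U`. The subset `U` contains `x₀` with probability `k / n`. Given
`x₀ ∉ U` it is a uniform `k`-subset `S` of `D'`; given `x₀ ∈ U` it is `{x₀} ∪ T` with `T` a uniform
`(k - 1)`-subset of `D'`, and such a `T` arises by deleting a uniform element `x` from `S`. Hence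
`n p(z) = (n - k) 𝔼 f S + k 𝔼 f ({x₀} ∪ S \ {x})` with `𝔼 f S = q(z)`. Replacing `x` by `x₀` moves
the mean of `S` by at most `1 / k` in `ℓ¹`, which costs at most a factor `exp (-1 / (kσ))`.
-/

open scoped BigOperators

section SubsetAverages

variable {α M : Type*} [DecidableEq α] [AddCommMonoid M]

theorem sum_powersetCard_succ_sum_erase (s : Finset α) (k : ℕ) (g : Finset α → M) :
    ∑ S ∈ s.powersetCard (k + 1), ∑ x ∈ S, g (S.erase x) =
      (#s - k) • ∑ T ∈ s.powersetCard k, g T := by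
  have regroup : ∑ S ∈ s.powersetCard (k + 1), ∑ x ∈ S, g (S.erase x) =
      ∑ T ∈ s.powersetCard k, ∑ _x ∈ s \ T, g T := by
    rw [sum_sigma', sum_sigma']
    refine sum_nbij' (fun p ↦ ⟨p.1.erase p.2, p.2⟩) (fun p ↦ ⟨insert p.2 p.1, p.2⟩) ?_ ?_ ?_ ?_
      (fun _ _ ↦ rfl)
    all_goals
      rintro ⟨A, x⟩ h
      simp only [mem_sigma, mem_powersetCard, mem_sdiff, Sigma.mk.injEq, heq_eq_eq] at h ⊢
      grind
  rw [regroup, smul_sum]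
  refine sum_congr rfl fun T hT ↦ ?_
  obtain ⟨hTs, hTcard⟩ := mem_powersetCard.mp hT
  rw [sum_const, card_sdiff_of_subset hTs, hTcard]

theorem sum_powersetCard_succ_insert {a : α} {s : Finset α} (ha : a ∉ s) (k : ℕ)
    (f : Finset α → M) :
    ∑ U ∈ (insert a s).powersetCard (k + 1), f U =
      ∑ S ∈ s.powersetCard (k + 1), f S + ∑ T ∈ s.powersetCard k, f (insert a T) := by
  have notMem_of_mem {j : ℕ} {T : Finset α} (hT : T ∈ s.powersetCard j) : a ∉ T :=
    notMem_mono (mem_powersetCard.mp hT).1 ha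
  rw [powersetCard_succ_insert ha, sum_union, sum_image]
  · exact insert_erase_invOn.2.injOn.mono fun T hT ↦ notMem_of_mem hT
  · refine disjoint_left.mpr fun S hS hS' ↦ notMem_of_mem hS ?_
    obtain ⟨T, -, rfl⟩ := mem_image.mp hS'
    exact mem_insert_self a T

variable [Module ℚ≥0 M]

theorem expect_powersetCard_succ_expect_erase {s : Finset α} {k : ℕ} (hk : k < #s)
    (g : Finset α → M) :
    𝔼 S ∈ s.powersetCard (k + 1), 𝔼 x ∈ S, g (S.erase x) = 𝔼 T ∈ s.powersetCard k, g T := by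
  have : IsAddTorsionFree M := .of_module_nnrat M
  have choose_mul_ne_zero : (#s).choose (k + 1) * (k + 1) ≠ 0 :=
    mul_ne_zero (Nat.choose_ne_zero hk) k.succ_ne_zero
  refine nsmul_right_injective choose_mul_ne_zero ?_
  calc ((#s).choose (k + 1) * (k + 1)) • 𝔼 S ∈ s.powersetCard (k + 1), 𝔼 x ∈ S, g (S.erase x)
      = (k + 1) • ∑ S ∈ s.powersetCard (k + 1), 𝔼 x ∈ S, g (S.erase x) := by
        rw [mul_comm, mul_smul, ← card_powersetCard, card_smul_expect]
    _ = ∑ S ∈ s.powersetCard (k + 1), ∑ x ∈ S, g (S.erase x) := by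
        rw [smul_sum]
        refine sum_congr rfl fun S hS ↦ ?_
        rw [← (mem_powersetCard.mp hS).2, card_smul_expect]
    _ = (#s - k) • (#s).choose k • 𝔼 T ∈ s.powersetCard k, g T := by
        rw [sum_powersetCard_succ_sum_erase, ← card_powersetCard k s, card_smul_expect]
    _ = ((#s).choose (k + 1) * (k + 1)) • 𝔼 T ∈ s.powersetCard k, g T := by
        rw [smul_smul, mul_comm, Nat.choose_succ_right_eq]

theorem card_smul_expect_powersetCard_insert {a : α} {s : Finset α} (ha : a ∉ s) {k : ℕ}
    (hk : k ≤ #s) (f : Finset α → M) :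
    (#s + 1) • 𝔼 U ∈ (insert a s).powersetCard (k + 1), f U =
      (#s - k) • 𝔼 S ∈ s.powersetCard (k + 1), f S +
        (k + 1) • 𝔼 T ∈ s.powersetCard k, f (insert a T) := by
  have : IsAddTorsionFree M := .of_module_nnrat M
  have card_avoiding : (#s + 1) * (#s).choose (k + 1) = (#s + 1).choose (k + 1) * (#s - k) := by
    rw [mul_comm, Nat.choose_mul_succ_eq, Nat.add_sub_add_right]
  have card_containing : (#s + 1) * (#s).choose k = (#s + 1).choose (k + 1) * (k + 1) :=
    Nat.add_one_mul_choose_eq _ _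
  have choose_ne_zero : (#s + 1).choose (k + 1) ≠ 0 := Nat.choose_ne_zero (by omega)
  refine nsmul_right_injective choose_ne_zero ?_
  calc (#s + 1).choose (k + 1) • (#s + 1) • 𝔼 U ∈ (insert a s).powersetCard (k + 1), f U
      = (#s + 1) • ∑ U ∈ (insert a s).powersetCard (k + 1), f U := by
        rw [smul_comm, ← card_insert_of_notMem ha, ← card_powersetCard, card_smul_expect]
    _ = (#s + 1) • ((#s).choose (k + 1) • 𝔼 S ∈ s.powersetCard (k + 1), f S +
          (#s).choose k • 𝔼 T ∈ s.powersetCard k, f (insert a T)) := by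
        simp only [sum_powersetCard_succ_insert ha, ← card_powersetCard, card_smul_expect]
    _ = (#s + 1).choose (k + 1) • ((#s - k) • 𝔼 S ∈ s.powersetCard (k + 1), f S +
          (k + 1) • 𝔼 T ∈ s.powersetCard k, f (insert a T)) := by
        simp only [smul_add, smul_smul, card_avoiding, card_containing]

theorem expect_powersetCard_succ_le_of_le_erase [PartialOrder M] [IsOrderedAddMonoid M]
    [PosSMulMono ℚ≥0 M] {s : Finset α} {k : ℕ} (hk : k < #s) {f g : Finset α → M}
    (hfg : ∀ S ∈ s.powersetCard (k + 1), ∀ x ∈ S, f S ≤ g (S.erase x)) :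
    𝔼 S ∈ s.powersetCard (k + 1), f S ≤ 𝔼 T ∈ s.powersetCard k, g T := by
  rw [← expect_powersetCard_succ_expect_erase hk]
  refine expect_le_expect fun S hS ↦ ?_
  have S_nonempty : S.Nonempty := card_pos.mp (by grind)
  exact le_expect S_nonempty (hfg S hS)

theorem mul_expect_powersetCard_le_of_mul_le_insert_erase {𝕜 : Type*} [Field 𝕜] [LinearOrder 𝕜]
    [IsStrictOrderedRing 𝕜] {a : α} {s : Finset α} (ha : a ∉ s) {k : ℕ} (hk : k < #s) {c : 𝕜}
    {f : Finset α → 𝕜}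
    (hf : ∀ S ∈ s.powersetCard (k + 1), ∀ x ∈ S, c * f S ≤ f (insert a (S.erase x))) :
    (#s - k + (k + 1) * c) * 𝔼 S ∈ s.powersetCard (k + 1), f S ≤
      (#s + 1) * 𝔼 U ∈ (insert a s).powersetCard (k + 1), f U := by
  have swap_le : c * 𝔼 S ∈ s.powersetCard (k + 1), f S ≤
      𝔼 T ∈ s.powersetCard k, f (insert a T) := by
    rw [mul_expect]
    exact expect_powersetCard_succ_le_of_le_erase (g := fun T ↦ f (insert a T)) hk hf
  have split := card_smul_expect_powersetCard_insert ha hk.le f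
  simp only [nsmul_eq_mul, Nat.cast_add, Nat.cast_one, Nat.cast_sub hk.le] at split
  rw [split, add_mul, mul_assoc]
  gcongr

end SubsetAverages

section Laplacian

variable {d : ℕ} {σ : ℝ}

theorem exp_neg_mul_laplacianDensity_le (hσ : 0 < σ) {a b : Fin d → ℝ} {r : ℝ}
    (hab : ∑ i, |a i - b i| ≤ r) :
    Real.exp (-(r / σ)) * laplacianDensity d σ a ≤ laplacianDensity d σ b := by
  have triangle : ∑ i, |b i| ≤ ∑ i, |a i - b i| + ∑ i, |a i| := by
    rw [← sum_add_distrib]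
    gcongr with i
    rw [abs_sub_comm]
    exact sub_le_iff_le_add.mp (abs_sub_abs_le_abs_sub _ _)
  have norm_le : ∑ i, |b i| ≤ r + ∑ i, |a i| := by linarith
  calc Real.exp (-(r / σ)) * laplacianDensity d σ a
      = ((2 * σ) ^ d)⁻¹ * Real.exp (-(r + ∑ i, |a i|) / σ) := by
        rw [laplacianDensity, mul_left_comm, ← Real.exp_add]
        ring_nf
    _ ≤ laplacianDensity d σ b := by
        unfold laplacianDensity
        gcongr

theorem exp_neg_mul_laplacianDensity_le_insert_erase (hσ : 0 < σ) {r : ℝ} (k : ℕ)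
    {S : Finset (Fin d → ℝ)} {x y : Fin d → ℝ} (hx : x ∈ S) (hy : y ∉ S)
    (hyx : ∑ i, |y i - x i| ≤ r) (z : Fin d → ℝ) :
    Real.exp (-(r / (k * σ))) * laplacianDensity d σ (z - (k : ℝ)⁻¹ • ∑ w ∈ S, w) ≤
      laplacianDensity d σ (z - (k : ℝ)⁻¹ • ∑ w ∈ insert y (S.erase x), w) := by
  have centre_shift : (z - (k : ℝ)⁻¹ • ∑ w ∈ S, w) -
      (z - (k : ℝ)⁻¹ • ∑ w ∈ insert y (S.erase x), w) = (k : ℝ)⁻¹ • (y - x) := by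
    rw [sum_insert (mt mem_of_mem_erase hy), ← add_sum_erase S _ hx]
    module
  rw [← div_div]
  refine exp_neg_mul_laplacianDensity_le hσ ?_
  simp_rw [← Pi.sub_apply, centre_shift, Pi.smul_apply, smul_eq_mul, abs_mul, ← mul_sum,
    abs_inv, Nat.abs_cast, div_eq_inv_mul, Pi.sub_apply]
  gcongr

end Laplacian

theorem mixupDensity_eq_expect (d : ℕ) (σ : ℝ) (k : ℕ) (P : Finset (Fin d → ℝ))
    (z : Fin d → ℝ) :
    mixupDensity d σ k P z =
      𝔼 S ∈ P.powersetCard k, laplacianDensity d σ (z - (k : ℝ)⁻¹ • ∑ x ∈ S, x) := by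
  rw [mixupDensity, expect_eq_sum_div_card, card_powersetCard, inv_mul_eq_div]

theorem mixup_density_lower_ratio_bound_general {d : ℕ} {σ : ℝ} (hσ : 0 < σ)
    {D : Finset (Fin d → ℝ)} {x₀ : Fin d → ℝ} (hx₀ : x₀ ∈ D) {r : ℝ}
    (hr : ∀ x ∈ D, ∑ i, |x₀ i - x i| ≤ r) {k : ℕ} (hk : 1 ≤ k) (hkD : k < #D)
    (z : Fin d → ℝ) :
    mixupDensity d σ k (D.erase x₀) z ≤
      #D / (#D - k + k * Real.exp (-(r / (k * σ)))) * mixupDensity d σ k D z := by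
  obtain ⟨j, rfl⟩ := Nat.exists_eq_add_of_le' hk
  have hcard : #(D.erase x₀) + 1 = #D := card_erase_add_one hx₀
  have average_le := mul_expect_powersetCard_le_of_mul_le_insert_erase (notMem_erase x₀ D)
    (by omega : j < #(D.erase x₀)) fun S hS x hx ↦
      have hSD : S ⊆ D.erase x₀ := (mem_powersetCard.mp hS).1
      exp_neg_mul_laplacianDensity_le_insert_erase hσ (j + 1) hx
        (notMem_mono hSD (notMem_erase x₀ D)) (hr x (mem_of_mem_erase (hSD hx))) z
  have denom_pos : 0 < (#D : ℝ) - (j + 1 : ℕ) +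
      (j + 1 : ℕ) * Real.exp (-(r / ((j + 1 : ℕ) * σ))) := by
    have : ((j + 1 : ℕ) : ℝ) < #D := mod_cast hkD
    exact add_pos (sub_pos.mpr this) (by positivity)
  rw [insert_erase hx₀, ← mixupDensity_eq_expect, ← mixupDensity_eq_expect] at average_le
  rw [div_mul_eq_mul_div, le_div_iff₀' denom_pos, ← hcard]
  push_cast at average_le ⊢
  rwa [add_sub_add_right_eq_sub]

/-- If `D` has ℓ¹ diameter at most 1, then
`q(z) ≤ (n / (n − k + k·exp(−1/(kσ))))·p(z)` for every `z ∈ ℝ^d`. -/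
theorem mixup_density_lower_ratio_bound
    (d : ℕ) (hd : 1 ≤ d) (σ : ℝ) (hσ : 0 < σ)
    (D : Finset (Fin d → ℝ)) (n : ℕ) (hn : D.card = n)
    (hdiam : ∀ x ∈ D, ∀ y ∈ D, ∑ i, |x i - y i| ≤ 1)
    (x₀ : Fin d → ℝ) (hx₀ : x₀ ∈ D)
    (k : ℕ) (hk1 : 1 ≤ k) (hkn : k ≤ n - 1)
    (z : Fin d → ℝ) :
    mixupDensity d σ k (D.erase x₀) z
      ≤ ((n : ℝ) / ((n : ℝ) - k + k * Real.exp (-(1 / (k * σ))))) *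
          mixupDensity d σ k D z := by
  subst hn
  exact mixup_density_lower_ratio_bound_general hσ hx₀ (hdiam x₀ hx₀) hk1 (by omega) z
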